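/- Let E be a directed graph with E^0 finite and K a non-absolute field. If the unit group L_K(E)^× of the Leavitt path algebra L_K(E) is a locally solvable group (every finitely generated subgroup is solvable), then L_K(E) is commutative. -/

import Mathlib

/-! The algebra `L = L_K(E)` is commutative as soon as every edge is a loop and distinct edges have
distinct sources: then (CK2) reads `v = e e^*` at a non-sink `v`, so all generators commute. If this
fails, there is either an edge `f` with `s(f) ≠ r(f)`, or a pair of distinct loops `e, f` at one
vertex. In the first case put `p₀ = f`, `p₁ = r(f)`, in the second `p₀ = e`, `p₁ = f`. With
`qᵢ = pᵢ^*` one has `qᵢ pⱼ = δᵢⱼ w` for a vertex `w`, so the elements `pᵢ qⱼ` form a system of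
`2 × 2` matrix units, and `M ↦ ∑ Mᵢⱼ pᵢ qⱼ + (1 - ∑ pᵢ qᵢ)` is a homomorphism `SL₂(K) → L^×`
(`LPA.slHom`). It is nontrivial because `w ≠ 0` (`LPA.vtx_ne_zero`), which is seen on a
representation of `L` on functions on `V × T`, where `T = E ⊕ ℕ`: as `T` is infinite with
`|E| ≤ |T|`, it is in bijection with the disjoint union of copies of itself indexed by the edges out
of any given non-sink.

A non-absolute field is infinite, so it has `a ≠ 0` with `a ^ 4 ≠ 1`. Let `b = a ^ 4 - 1` and let
`G ≤ SL₂(K)` be generated by the two elementary matrices `U`, `V` with entry `1` and by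
`A = diag(a, a⁻¹)`, `B = diag(b, b⁻¹)`. Every normal subgroup `N` of `G` containing `U` and `V`
satisfies `U, V ∈ [N, N]`: conjugating `A` by the Weyl element `U V⁻¹ U` gives `A² ∈ N`;
since `b⁻¹ = a⁴ b⁻² - b⁻²`, the matrix `y` with upper right entry `b⁻¹` is a product of
conjugates of `U^±1`; and `U = [A², y]`. Hence `U` lies in all terms of the derived series of `G`,
and so does its image in `L^×`. Thus the image of `G`, a finitely generated group, is not
solvable. -/

noncomputable section
open scoped Classical
universe u

/-- `a` and `b` generate a free group of rank two, i.e. form a non-cyclic free subgroup. -/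
def FreePair {G : Type*} [Group G] (a b : G) : Prop :=
  Function.Injective (FreeGroup.lift ![a, b] : FreeGroup (Fin 2) →* G)

/-- A field is absolute (locally finite) if every finite subset generates a finite
subfield over the prime subfield. -/
def IsAbsoluteField (K : Type*) [Field K] : Prop :=
  ∀ S : Finset K, ((Subfield.closure (S : Set K) : Subfield K) : Set K).Finite

/-- `a` is transcendental over the prime subfield of `K`. -/
def TranscendentalOverPrime (K : Type*) [Field K] (a : K) : Prop :=
  ∀ p : Polynomial ℤ, Polynomial.aeval a p = 0 → p.map (Int.castRingHom K) = 0

/-- `a` and `b` are algebraically independent over the prime subfield of `K`. -/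
def AlgIndepOverPrime (K : Type*) [Field K] (a b : K) : Prop :=
  ∀ p : MvPolynomial (Fin 2) ℤ, MvPolynomial.aeval ![a, b] p = 0 →
    MvPolynomial.map (Int.castRingHom K) p = 0

/-- A two-sided ideal is (left) primitive if it is the annihilator of a simple left module. -/
def IsPrimitiveIdeal {R : Type u} [Ring R] (P : TwoSidedIdeal R) : Prop :=
  ∃ (M : Type u) (_ : AddCommGroup M) (_ : Module R M),
    IsSimpleModule R M ∧ ∀ x : R, x ∈ P ↔ ∀ m : M, x • m = 0

namespace LPA

/-- Generators of Cohn/Leavitt path algebras: vertices, edges and ghost edges. -/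
inductive Gen (V : Type*) (E : Type*)
  | vertex : V → Gen V E
  | edge : E → Gen V E
  | ghost : E → Gen V E

section rels

variable (K : Type*) [Field K] {V E : Type*} (s r : E → V)

/-- The defining relations (V), (E1), (E2), (CK1) of the Cohn path algebra of the graph
with vertex set `V`, edge set `E`, source map `s` and range map `r`; together with the
identification of `1` with the sum of all vertices when the vertex set is finite. -/
inductive CohnRel : FreeAlgebra K (Gen V E) → FreeAlgebra K (Gen V E) → Prop
  | vtx_mul (v w : V) :
      CohnRel (FreeAlgebra.ι K (Gen.vertex v) * FreeAlgebra.ι K (Gen.vertex w))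
        (if v = w then FreeAlgebra.ι K (Gen.vertex v) else 0)
  | edge_src (e : E) :
      CohnRel (FreeAlgebra.ι K (Gen.vertex (s e)) * FreeAlgebra.ι K (Gen.edge e))
        (FreeAlgebra.ι K (Gen.edge e))
  | edge_rng (e : E) :
      CohnRel (FreeAlgebra.ι K (Gen.edge e) * FreeAlgebra.ι K (Gen.vertex (r e)))
        (FreeAlgebra.ι K (Gen.edge e))
  | ghost_rng (e : E) :
      CohnRel (FreeAlgebra.ι K (Gen.vertex (r e)) * FreeAlgebra.ι K (Gen.ghost e))
        (FreeAlgebra.ι K (Gen.ghost e))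
  | ghost_src (e : E) :
      CohnRel (FreeAlgebra.ι K (Gen.ghost e) * FreeAlgebra.ι K (Gen.vertex (s e)))
        (FreeAlgebra.ι K (Gen.ghost e))
  | ck1 (e f : E) :
      CohnRel (FreeAlgebra.ι K (Gen.ghost e) * FreeAlgebra.ι K (Gen.edge f))
        (if e = f then FreeAlgebra.ι K (Gen.vertex (r e)) else 0)
  | unit [Fintype V] :
      CohnRel (1 : FreeAlgebra K (Gen V E)) (∑ v : V, FreeAlgebra.ι K (Gen.vertex v))

/-- The defining relations of the Leavitt path algebra: those of the Cohn path algebra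
together with the (CK2) relations at every regular vertex. -/
inductive LeavittRel : FreeAlgebra K (Gen V E) → FreeAlgebra K (Gen V E) → Prop
  | cohn {a b : FreeAlgebra K (Gen V E)} : CohnRel K s r a b → LeavittRel a b
  | ck2 (v : V) (hfin : {e : E | s e = v}.Finite) (hne : {e : E | s e = v}.Nonempty) :
      LeavittRel (FreeAlgebra.ι K (Gen.vertex v))
        (∑ e ∈ hfin.toFinset, FreeAlgebra.ι K (Gen.edge e) * FreeAlgebra.ι K (Gen.ghost e))

/-- The Cohn path algebra of the graph `(V, E, s, r)` with coefficients in `K`. -/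
abbrev CohnPathAlgebra := RingQuot (CohnRel K s r)

/-- The Leavitt path algebra of the graph `(V, E, s, r)` with coefficients in `K`. -/
abbrev LeavittPathAlgebra := RingQuot (LeavittRel K s r)

/-- The image of a vertex in the Leavitt path algebra. -/
def vtx (v : V) : LeavittPathAlgebra K s r :=
  RingQuot.mkAlgHom K (LeavittRel K s r) (FreeAlgebra.ι K (Gen.vertex v))

/-- The image of an edge in the Leavitt path algebra. -/
def edg (e : E) : LeavittPathAlgebra K s r :=
  RingQuot.mkAlgHom K (LeavittRel K s r) (FreeAlgebra.ι K (Gen.edge e))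

/-- The image of a ghost edge in the Leavitt path algebra. -/
def gh (e : E) : LeavittPathAlgebra K s r :=
  RingQuot.mkAlgHom K (LeavittRel K s r) (FreeAlgebra.ι K (Gen.ghost e))

end rels

section graph

variable {V E : Type*}

/-- `u ≥ v` : there is a (finite, possibly trivial) path from `u` to `v`. -/
def Reaches (s r : E → V) (u v : V) : Prop :=
  Relation.ReflTransGen (fun a b => ∃ e : E, s e = a ∧ r e = b) u v

/-- A sink emits no edges. -/
def IsSink (s : E → V) (v : V) : Prop := ∀ e : E, s e ≠ v

/-- An infinite emitter emits infinitely many edges. -/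
def IsInfiniteEmitter (s : E → V) (v : V) : Prop := {e : E | s e = v}.Infinite

/-- A regular vertex is neither a sink nor an infinite emitter. -/
def IsRegular (s : E → V) (v : V) : Prop :=
  (∃ e : E, s e = v) ∧ {e : E | s e = v}.Finite

/-- Hereditary subsets of vertices. -/
def IsHereditary (s r : E → V) (H : Set V) : Prop :=
  ∀ u ∈ H, ∀ v : V, Reaches s r u v → v ∈ H

/-- Saturated subsets of vertices. -/
def IsSaturated (s r : E → V) (H : Set V) : Prop :=
  ∀ v : V, IsRegular s v → (∀ e : E, s e = v → r e ∈ H) → v ∈ H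

/-- A breaking vertex of a hereditary saturated set `H`. -/
def IsBreakingVertex (s r : E → V) (H : Set V) (w : V) : Prop :=
  w ∉ H ∧ IsInfiniteEmitter s w ∧
    {e : E | s e = w ∧ r e ∉ H}.Finite ∧ {e : E | s e = w ∧ r e ∉ H}.Nonempty

/-- An infinite path, as a sequence of composable edges. -/
def IsInfPath (s r : E → V) (p : ℕ → E) : Prop := ∀ i, r (p i) = s (p (i + 1))

/-- Tail equivalence of infinite paths. -/
def TailEquiv (p q : ℕ → E) : Prop := ∃ m n : ℕ, ∀ i, p (m + i) = q (n + i)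

/-- Prepending an edge to an infinite path. -/
def consPath (f : E) (p : ℕ → E) : ℕ → E := fun i =>
  match i with
  | 0 => f
  | (j + 1) => p j

/-- A cycle of length `m`, encoded as the `m`-periodic infinite path obtained by
traversing it repeatedly; the sources of its first `m` edges are pairwise distinct. -/
def IsCycle (s r : E → V) (m : ℕ) (c : ℕ → E) : Prop :=
  0 < m ∧ IsInfPath s r c ∧ (∀ i, c (i + m) = c i) ∧
    ∀ i j, i < m → j < m → s (c i) = s (c j) → i = j

/-- A cycle (as a periodic infinite path) has no exits. -/
def CycleNoExit (s : E → V) (c : ℕ → E) : Prop :=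
  ∀ i, ∀ e : E, s e = s (c i) → e = c i

/-- An exclusive cycle: every cycle based at one of its vertices is a rotation of it. -/
def IsExclusiveCycle (s r : E → V) (m : ℕ) (c : ℕ → E) : Prop :=
  IsCycle s r m c ∧ ∀ (m' : ℕ) (c' : ℕ → E), IsCycle s r m' c' →
    (∃ i, s (c' 0) = s (c i)) → ∃ k, ∀ j, c' j = c (j + k)

/-- `l` is (the list of edges of) a finite path starting at the vertex `v`
(the empty list is the trivial path at `v`). -/
def IsPathFrom (s r : E → V) (v : V) (l : List E) : Prop :=
  l.Chain' (fun e f => r e = s f) ∧ ∀ h : l ≠ [], s (l.head h) = v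

/-- The terminal vertex of a finite path starting at `v`. -/
def pathEnd (r : E → V) (v : V) (l : List E) : V :=
  if h : l ≠ [] then r (l.getLast h) else v

end graph

section elements

variable (K : Type*) [Field K] {V E : Type*} (s r : E → V)

/-- The finite set of edges emitted by a breaking vertex `w` of `H` whose range is
outside `H` (junk value `∅` if that set of edges is infinite). -/
def breakingFinset (H : Set V) (w : V) : Finset E :=
  if h : {e : E | s e = w ∧ r e ∉ H}.Finite then h.toFinset else ∅

/-- The element `w^H = w - ∑_{s(e) = w, r(e) ∉ H} e e^*` of the Leavitt path algebra. -/
def wHElem (H : Set V) (w : V) : LeavittPathAlgebra K s r :=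
  vtx K s r w - ∑ e ∈ breakingFinset s r H w, edg K s r e * gh K s r e

/-- The ideal `I(H, S)` generated by the vertices in `H` and the elements `w^H`, `w ∈ S`. -/
def idealHS (H : Set V) (S : Set V) : TwoSidedIdeal (LeavittPathAlgebra K s r) :=
  TwoSidedIdeal.span ((fun v => vtx K s r v) '' H ∪ (fun w => wHElem K s r H w) '' S)

end elements

end LPA

/-- A (left) primitive ring: a ring admitting a faithful simple left module. -/
def IsPrimitiveRing (R : Type u) [Ring R] : Prop :=
  ∃ (M : Type u) (_ : AddCommGroup M) (_ : Module R M),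
    IsSimpleModule R M ∧ ∀ x : R, (∀ m : M, x • m = 0) → x = 0

namespace LPA

section conc

variable {V E : Type*}

/-- Reachability through paths all of whose vertices beyond the first lie outside `H`,
i.e. reachability in the quotient graph `E ∖ (H, B_H)`. -/
def ReachesOutside (s r : E → V) (H : Set V) (u v : V) : Prop :=
  Relation.ReflTransGen (fun a b => ∃ e : E, s e = a ∧ r e = b ∧ r e ∉ H) u v

variable (K : Type*) [Field K] (s r : E → V)

/-- The standard conclusion: for an edge `f`, in characteristic zero the elements
`a = 1 + α f^*`, `b = 1 + α f` (with `α = 2` or transcendental over the prime field)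
generate a non-cyclic free subgroup of `L_K(E)^×`, and in characteristic `t > 0` the
elements `c = a + (β - 1) s(f) + (β⁻¹ - 1) r(f)`, `d = b + (β - 1) s(f) + (β⁻¹ - 1) r(f)`
(with `α, β` algebraically independent over the prime field) do. -/
def FreeSubgroupFromEdge (f : E) : Prop :=
  ∀ α β : K,
    (CharP K 0 → (α = 2 ∨ TranscendentalOverPrime K α) →
      ∃ ua ub : (LeavittPathAlgebra K s r)ˣ,
        (ua : LeavittPathAlgebra K s r) =
            1 + algebraMap K (LeavittPathAlgebra K s r) α * gh K s r f ∧
        (ub : LeavittPathAlgebra K s r) =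
            1 + algebraMap K (LeavittPathAlgebra K s r) α * edg K s r f ∧
        FreePair ua ub) ∧
    (∀ t : ℕ, 0 < t → CharP K t → AlgIndepOverPrime K α β →
      ∃ uc ud : (LeavittPathAlgebra K s r)ˣ,
        (uc : LeavittPathAlgebra K s r) =
            1 + algebraMap K (LeavittPathAlgebra K s r) α * gh K s r f
              + algebraMap K (LeavittPathAlgebra K s r) (β - 1) * vtx K s r (s f)
              + algebraMap K (LeavittPathAlgebra K s r) (β⁻¹ - 1) * vtx K s r (r f) ∧
        (ud : LeavittPathAlgebra K s r) =
            1 + algebraMap K (LeavittPathAlgebra K s r) α * edg K s r f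
              + algebraMap K (LeavittPathAlgebra K s r) (β - 1) * vtx K s r (s f)
              + algebraMap K (LeavittPathAlgebra K s r) (β⁻¹ - 1) * vtx K s r (r f) ∧
        FreePair uc ud)

end conc

end LPA


/-! ### A group-theoretic obstruction to solvability -/

/-- The hypotheses are relations between the matrices `U`, `V`, `A`, `B` of `SL₂(K)`, for
`A = diag(a, a⁻¹)` and `B = diag(a ^ 4 - 1, (a ^ 4 - 1)⁻¹)`. They put `u` in every term of the
derived series. -/
lemma eq_one_of_sl_relations {G : Type*} [Group G] [Group.IsSolvable G] (u v A B y z : G)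
    (hw : (u * v⁻¹ * u) * A * (u * v⁻¹ * u)⁻¹ = A⁻¹)
    (hy : y = (A ^ 2 * (B⁻¹ * u * B) * (A ^ 2)⁻¹) * (B⁻¹ * u * B)⁻¹)
    (hu : u = A ^ 2 * y * (A ^ 2)⁻¹ * y⁻¹)
    (hz : z = ((A ^ 2)⁻¹ * (B * v * B⁻¹) * A ^ 2) * (B * v * B⁻¹)⁻¹)
    (hv : v = (A ^ 2)⁻¹ * z * A ^ 2 * z⁻¹) : u = 1 := by
  have key : ∀ n, u ∈ derivedSeries G n ∧ v ∈ derivedSeries G n := by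
    intro n
    induction n with
    | zero => simp
    | succ n ih =>
      obtain ⟨iu, iv⟩ := ih
      have hN : (derivedSeries G n).Normal := derivedSeries_normal G n
      set N := derivedSeries G n
      have conj' : ∀ x ∈ N, ∀ g : G, g⁻¹ * x * g ∈ N := fun x hx g => by
        simpa using hN.conj_mem x hx g⁻¹
      have w_mem : u * v⁻¹ * u ∈ N := mul_mem (mul_mem iu (inv_mem iv)) iu
      -- `A⁻² = w * (A * w⁻¹ * A⁻¹)` for the Weyl element `w`
      have A_mem : (A ^ 2)⁻¹ ∈ N := by
        have h : (A ^ 2)⁻¹ = (u * v⁻¹ * u) * (A * (u * v⁻¹ * u)⁻¹ * A⁻¹) := by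
          calc (A ^ 2)⁻¹ = A⁻¹ * A⁻¹ := by group
            _ = _ := by nth_rewrite 1 [← hw]; group
        rw [h]
        exact mul_mem w_mem (hN.conj_mem _ (inv_mem w_mem) A)
      have A_mem' : A ^ 2 ∈ N := by simpa using inv_mem A_mem
      have y_mem : y ∈ N := by
        rw [hy]
        exact mul_mem (hN.conj_mem _ (conj' _ iu B) _) (inv_mem (conj' _ iu B))
      have z_mem : z ∈ N := by
        rw [hz]
        exact mul_mem (conj' _ (hN.conj_mem _ iv B) _) (inv_mem (hN.conj_mem _ iv B))
      rw [derivedSeries_succ]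
      constructor
      · rw [hu]; exact Subgroup.commutator_mem_commutator A_mem' y_mem
      · rw [hv]; simpa [commutatorElement_def] using Subgroup.commutator_mem_commutator A_mem z_mem
  obtain ⟨n, hn⟩ := (Group.isSolvable_def G).1 inferInstance
  have := (key n).1
  rwa [hn, Subgroup.mem_bot] at this

/-- The upper unitriangular matrix with entry `x`. -/
def slU {K : Type*} [Field K] (x : K) : Matrix.SpecialLinearGroup (Fin 2) K :=
  ⟨!![1, x; 0, 1], by simp [Matrix.det_fin_two]⟩

/-- The lower unitriangular matrix with entry `x`. -/
def slV {K : Type*} [Field K] (x : K) : Matrix.SpecialLinearGroup (Fin 2) K :=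
  ⟨!![1, 0; x, 1], by simp [Matrix.det_fin_two]⟩

/-- The matrix `diag(a, a⁻¹)`. -/
def slD {K : Type*} [Field K] (a : K) (ha : a ≠ 0) : Matrix.SpecialLinearGroup (Fin 2) K :=
  ⟨!![a, 0; 0, a⁻¹], by simp [Matrix.det_fin_two, ha]⟩

section sl

variable {K : Type*} [Field K]

lemma coe_slU (x : K) : (slU x : Matrix (Fin 2) (Fin 2) K) = !![1, x; 0, 1] := rfl

lemma coe_slV (x : K) : (slV x : Matrix (Fin 2) (Fin 2) K) = !![1, 0; x, 1] := rfl

lemma coe_slD (a : K) (ha : a ≠ 0) :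
    (slD a ha : Matrix (Fin 2) (Fin 2) K) = !![a, 0; 0, a⁻¹] := rfl

lemma slU_mul (x y : K) : slU x * slU y = slU (x + y) := by
  ext i j; fin_cases i <;> fin_cases j <;> simp [coe_slU, add_comm]

lemma slV_mul (x y : K) : slV x * slV y = slV (x + y) := by
  ext i j; fin_cases i <;> fin_cases j <;> simp [coe_slV]

lemma slU_zero : slU (0 : K) = 1 := by
  ext i j; fin_cases i <;> fin_cases j <;> simp [coe_slU]

lemma slV_zero : slV (0 : K) = 1 := by
  ext i j; fin_cases i <;> fin_cases j <;> simp [coe_slV]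

lemma slU_inv (x : K) : (slU x)⁻¹ = slU (-x) :=
  inv_eq_of_mul_eq_one_right (by rw [slU_mul, add_neg_cancel, slU_zero])

lemma slV_inv (x : K) : (slV x)⁻¹ = slV (-x) :=
  inv_eq_of_mul_eq_one_right (by rw [slV_mul, add_neg_cancel, slV_zero])

lemma slD_inv (a : K) (ha : a ≠ 0) : (slD a ha)⁻¹ = slD a⁻¹ (inv_ne_zero ha) := by
  apply inv_eq_of_mul_eq_one_right
  ext i j; fin_cases i <;> fin_cases j <;> simp [coe_slD, ha]

lemma slD_sq (a : K) (ha : a ≠ 0) : slD a ha ^ 2 = slD (a ^ 2) (pow_ne_zero 2 ha) := by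
  rw [sq]
  ext i j; fin_cases i <;> fin_cases j <;> simp [coe_slD, sq]

lemma slD_slU (a x : K) (ha : a ≠ 0) :
    slD a ha * slU x * slD a⁻¹ (inv_ne_zero ha) = slU (a ^ 2 * x) := by
  ext i j; fin_cases i <;> fin_cases j <;> simp [coe_slD, coe_slU, ha] <;> ring

lemma slD_slV (a x : K) (ha : a ≠ 0) :
    slD a ha * slV x * slD a⁻¹ (inv_ne_zero ha) = slV (a⁻¹ ^ 2 * x) := by
  ext i j; fin_cases i <;> fin_cases j <;> simp [coe_slD, coe_slV, ha] <;> ring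

lemma slD_slU' (a x : K) (ha : a ≠ 0) :
    slD a⁻¹ (inv_ne_zero ha) * slU x * slD a ha = slU (a⁻¹ ^ 2 * x) := by
  ext i j; fin_cases i <;> fin_cases j <;> simp [coe_slD, coe_slU, ha] <;> ring

lemma slD_slV' (a x : K) (ha : a ≠ 0) :
    slD a⁻¹ (inv_ne_zero ha) * slV x * slD a ha = slV (a ^ 2 * x) := by
  ext i j; fin_cases i <;> fin_cases j <;> simp [coe_slD, coe_slV, ha] <;> ring

lemma weyl_slD (a : K) (ha : a ≠ 0) :
    (slU 1 * (slV 1)⁻¹ * slU 1) * slD a ha * (slU 1 * (slV 1)⁻¹ * slU 1)⁻¹ = (slD a ha)⁻¹ := by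
  rw [slV_inv, mul_inv_eq_iff_eq_mul, slD_inv]
  ext i j; fin_cases i <;> fin_cases j <;> simp [coe_slD, coe_slU, coe_slV]

/-- A homomorphism from `SL₂(K)` to a locally solvable group kills `slU 1`. -/
lemma slHom_eq_one {G : Type*} [Group G] (f : Matrix.SpecialLinearGroup (Fin 2) K →* G)
    (hG : ∀ S : Finset G, Group.IsSolvable (Subgroup.closure (S : Set G)))
    (a : K) (ha : a ≠ 0) (ha4 : a ^ 4 - 1 ≠ 0) : f (slU 1) = 1 := by
  set b := a ^ 4 - 1 with hb
  set A := slD a ha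
  set B := slD b ha4
  set y := slU b⁻¹ with hy
  set z := slV b⁻¹ with hz
  have e : (a ^ 2) ^ 2 = b + 1 := by rw [hb]; ring
  have ey : y = (A ^ 2 * (B⁻¹ * slU 1 * B) * (A ^ 2)⁻¹) * (B⁻¹ * slU 1 * B)⁻¹ := by
    simp only [A, B, slD_sq, slD_inv, slD_slU', slD_slU, slU_inv, slU_mul, y]
    congr 1
    rw [e]; field_simp; ring
  have eu : slU 1 = A ^ 2 * y * (A ^ 2)⁻¹ * y⁻¹ := by
    simp only [A, slD_sq, slD_inv, slD_slU, slU_inv, slU_mul, y]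
    congr 1
    rw [e]; field_simp; ring
  have ez : z = ((A ^ 2)⁻¹ * (B * slV 1 * B⁻¹) * A ^ 2) * (B * slV 1 * B⁻¹)⁻¹ := by
    simp only [A, B, slD_sq, slD_inv, slD_slV', slD_slV, slV_inv, slV_mul, z]
    congr 1
    rw [e]; field_simp; ring
  have ev : slV 1 = (A ^ 2)⁻¹ * z * A ^ 2 * z⁻¹ := by
    simp only [A, slD_sq, slD_inv, slD_slV', slV_inv, slV_mul, z]
    congr 1
    rw [e]; field_simp; ring
  have ew := weyl_slD a ha
  let S : Finset G := {f (slU 1), f (slV 1), f A, f B}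
  have mem : ∀ x ∈ S, x ∈ Subgroup.closure (S : Set G) := fun x hx => Subgroup.subset_closure hx
  let H := Subgroup.closure (S : Set G)
  have : Group.IsSolvable H := hG S
  let u' : H := ⟨f (slU 1), mem _ (by simp [S])⟩
  let v' : H := ⟨f (slV 1), mem _ (by simp [S])⟩
  let A' : H := ⟨f A, mem _ (by simp [S])⟩
  let B' : H := ⟨f B, mem _ (by simp [S])⟩
  let y' : H := (A' ^ 2 * (B'⁻¹ * u' * B') * (A' ^ 2)⁻¹) * (B'⁻¹ * u' * B')⁻¹
  let z' : H := ((A' ^ 2)⁻¹ * (B' * v' * B'⁻¹) * A' ^ 2) * (B' * v' * B'⁻¹)⁻¹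
  have hy' : (y' : G) = f y := by rw [ey]; simp [y', u', A', B']
  have hz' : (z' : G) = f z := by rw [ez]; simp [z', v', A', B']
  have := eq_one_of_sl_relations u' v' A' B' y' z'
    (Subtype.ext (by simpa [u', v', A'] using congrArg f ew)) rfl
    (Subtype.ext (by
      have := congrArg f eu
      simpa [u', A', hy'] using this)) rfl
    (Subtype.ext (by
      have := congrArg f ev
      simpa [v', A', hz'] using this))
  exact congrArg Subtype.val this

end sl

lemma exists_pow_four_ne_one {K : Type*} [Field K] (hK : ¬ IsAbsoluteField K) :
    ∃ a : K, a ≠ 0 ∧ a ^ 4 - 1 ≠ 0 := by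
  have hinf : Infinite K := by
    by_contra h
    rw [not_infinite_iff_finite] at h
    exact hK fun S => Set.toFinite _
  have hp : (Polynomial.X * (Polynomial.X ^ 4 - Polynomial.C 1) : Polynomial K) ≠ 0 :=
    mul_ne_zero Polynomial.X_ne_zero (Polynomial.X_pow_sub_C_ne_zero (by norm_num) 1)
  obtain ⟨a, ha⟩ := Polynomial.exists_eval_ne_zero_of_natDegree_lt_card _ hp
    (lt_of_lt_of_le (Cardinal.natCast_lt_aleph0) (Cardinal.aleph0_le_mk K))
  refine ⟨a, ?_, ?_⟩ <;> intro h <;> apply ha <;> simp at h ⊢ <;> simp [h]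

namespace LPA

/-! ### `SL₂(K)` from a system of matrix units -/

section units

variable {K L : Type*} [Field K] [Ring L] [Algebra K L] (p q : Fin 2 → L)

/-- The linear map `M ↦ ∑ Mᵢⱼ pᵢ qⱼ`. -/
def matMap (M : Matrix (Fin 2) (Fin 2) K) : L := ∑ i, ∑ j, M i j • (p i * q j)

/-- By `qᵢ pⱼ = δᵢⱼ w` and `pᵢ w = pᵢ`, the elements `pᵢ qⱼ` multiply like matrix units. -/
lemma matMap_mul {w : L} (hqp : ∀ i j, q i * p j = if i = j then w else 0)
    (hpw : ∀ i, p i * w = p i) (M N : Matrix (Fin 2) (Fin 2) K) :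
    matMap p q M * matMap p q N = matMap p q (M * N) := by
  have h : ∀ i j k l, (p i * q j) * (p k * q l) = if j = k then p i * q l else 0 := by
    intro i j k l
    rw [mul_assoc, ← mul_assoc (q j), hqp]
    split_ifs
    · rw [← mul_assoc, hpw]
    · simp
  simp only [matMap, Fin.sum_univ_two, mul_add, add_mul, smul_mul_smul_comm, h,
    Matrix.mul_apply, add_smul]
  simp
  abel

/-- The homomorphism `M ↦ ∑ Mᵢⱼ pᵢ qⱼ + (1 - ∑ pᵢ qᵢ)` from `SL₂(K)` to the units of `L`, for
elements with `qᵢ pⱼ = δᵢⱼ w`. -/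
def slHom {w : L} (hqp : ∀ i j, q i * p j = if i = j then w else 0)
    (hpw : ∀ i, p i * w = p i) : Matrix.SpecialLinearGroup (Fin 2) K →* Lˣ :=
  MonoidHom.toHomUnits
    { toFun := fun M => matMap p q M.1 + (1 - matMap p q (1 : Matrix (Fin 2) (Fin 2) K))
      map_one' := by simp
      map_mul' := fun M N => by
        have h := matMap_mul (K := K) p q hqp hpw
        simp only [Matrix.SpecialLinearGroup.coe_mul, mul_add, add_mul, mul_sub, sub_mul, h,
          mul_one, one_mul]
        abel }

lemma slHom_ne_one {w : L} (hqp : ∀ i j, q i * p j = if i = j then w else 0)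
    (hpw : ∀ i, p i * w = p i) (hw : w ≠ 0) (hww : w * w = w) :
    slHom (K := K) p q hqp hpw (slU 1) ≠ 1 := by
  intro h
  have h1 : matMap p q (slU (1 : K)).1 + (1 - matMap p q (1 : Matrix (Fin 2) (Fin 2) K)) = 1 :=
    congrArg Units.val h
  have h2 : p 0 * q 1 = 0 := by
    simp [matMap, slU, Fin.sum_univ_two] at h1
    rw [← sub_eq_zero] at h1
    rw [← h1]
    abel
  apply hw
  calc w = (q 0 * p 0) * (q 1 * p 1) := by rw [hqp, hqp]; simp [hww]
    _ = q 0 * (p 0 * q 1) * p 1 := by simp only [mul_assoc]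
    _ = 0 := by rw [h2]; simp

end units

/-! ### Relations in the Leavitt path algebra -/

section relations

variable (K : Type*) [Field K] {V E : Type*} (s r : E → V)

lemma mk_eq {a b : FreeAlgebra K (Gen V E)} (h : LeavittRel K s r a b) :
    RingQuot.mkAlgHom K (LeavittRel K s r) a = RingQuot.mkAlgHom K (LeavittRel K s r) b :=
  RingQuot.mkAlgHom_rel K h

lemma vtx_mul_vtx (v w : V) :
    vtx K s r v * vtx K s r w = if v = w then vtx K s r v else 0 := by
  have := mk_eq K s r (.cohn (.vtx_mul v w))
  rw [map_mul] at this
  split_ifs at this ⊢ with h <;> simpa [vtx] using this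

lemma vtx_mul_edg (e : E) : vtx K s r (s e) * edg K s r e = edg K s r e := by
  simpa [vtx, edg] using mk_eq K s r (.cohn (.edge_src e))

lemma edg_mul_vtx (e : E) : edg K s r e * vtx K s r (r e) = edg K s r e := by
  simpa [vtx, edg] using mk_eq K s r (.cohn (.edge_rng e))

lemma vtx_mul_gh (e : E) : vtx K s r (r e) * gh K s r e = gh K s r e := by
  simpa [vtx, gh] using mk_eq K s r (.cohn (.ghost_rng e))

lemma gh_mul_vtx (e : E) : gh K s r e * vtx K s r (s e) = gh K s r e := by
  simpa [vtx, gh] using mk_eq K s r (.cohn (.ghost_src e))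

lemma gh_mul_edg (e f : E) :
    gh K s r e * edg K s r f = if e = f then vtx K s r (r e) else 0 := by
  have := mk_eq K s r (.cohn (.ck1 e f))
  rw [map_mul] at this
  split_ifs at this ⊢ with h <;> simpa [vtx, edg, gh] using this

lemma edg_mul_gh_of_unique (e : E) (h : ∀ f, s f = s e → f = e) :
    edg K s r e * gh K s r e = vtx K s r (s e) := by
  have hset : {f : E | s f = s e} = {e} := by
    ext f; exact ⟨h f, fun hf => by rw [hf]; rfl⟩
  have hfin : {f : E | s f = s e}.Finite := by rw [hset]; exact Set.finite_singleton e
  have := mk_eq K s r (.ck2 (s e) hfin ⟨e, rfl⟩)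
  have hF : hfin.toFinset = {e} := by ext f; simp [Set.ext_iff] at hset ⊢; exact hset f
  rw [hF, Finset.sum_singleton, map_mul] at this
  exact this.symm

/-! ### Vertices are nonzero -/

/-- Injections `ι e` of the infinite set `E ⊕ ℕ` into itself such that, for each non-sink `v`, the
ranges of the `ι e` with `s e = v` partition it. -/
lemma exists_branching : ∃ ι : E → E ⊕ ℕ → E ⊕ ℕ,
    (∀ e, Function.Injective (ι e)) ∧
    (∀ e f t t', s e = s f → ι e t = ι f t' → e = f) ∧
    (∀ e t, ∃ f t', s f = s e ∧ ι f t' = t) := by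
  have heq : ∀ v : V, (∃ e, s e = v) → Nonempty ({e // s e = v} × (E ⊕ ℕ) ≃ E ⊕ ℕ) := by
    rintro v ⟨e, he⟩
    rw [← Cardinal.eq, Cardinal.mk_prod, Cardinal.lift_id, Cardinal.lift_id]
    refine Cardinal.mul_eq_right (Cardinal.aleph0_le_mk _) ?_ ?_
    · exact Cardinal.mk_le_of_injective (f := fun x : {e // s e = v} => Sum.inl x.1)
        (fun x y h => Subtype.ext (Sum.inl_injective h))
    · exact Cardinal.mk_ne_zero_iff.2 ⟨⟨e, he⟩⟩
  let φ : ∀ v, (∃ e, s e = v) → {e // s e = v} × (E ⊕ ℕ) ≃ E ⊕ ℕ := fun v h => (heq v h).some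
  have transport : ∀ (v : V) (hv : ∃ e, s e = v) (f : E) (hf : s f = v) (t : E ⊕ ℕ),
      φ v hv (⟨f, hf⟩, t) = φ (s f) ⟨f, rfl⟩ (⟨f, rfl⟩, t) := by
    rintro v hv f rfl t; rfl
  refine ⟨fun e t => φ (s e) ⟨e, rfl⟩ (⟨e, rfl⟩, t), ?_, ?_, ?_⟩
  · intro e t t' h
    exact (Prod.ext_iff.1 ((φ (s e) ⟨e, rfl⟩).injective h)).2
  · intro e f t t' hs h
    dsimp only at h
    rw [← transport (s e) ⟨e, rfl⟩ f hs.symm] at h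
    exact congrArg Subtype.val (Prod.ext_iff.1 ((φ (s e) ⟨e, rfl⟩).injective h)).1
  · intro e t
    obtain ⟨⟨⟨f, hf⟩, t'⟩, h⟩ := (φ (s e) ⟨e, rfl⟩).surjective t
    exact ⟨f, t', hf, (transport (s e) ⟨e, rfl⟩ f hf t').symm.trans h⟩

variable {T : Type*} (ι : E → T → T)

/-- The action of the generators on functions `V × T → K` attached to a branching system `ι`:
a vertex restricts to its fibre, an edge `e` pushes the fibre over `r e` forward along `ι e` into
the fibre over `s e`, extending by zero, and its ghost pulls back. -/
def genAct : Gen V E → Module.End K (V × T → K)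
  | .vertex v =>
    { toFun := fun g x => if x.1 = v then g x else 0
      map_add' := fun g h => by ext x; simp only [Pi.add_apply]; split_ifs <;> simp
      map_smul' := fun c g => by ext x; simp }
  | .edge e =>
    { toFun := fun g x =>
        if x.1 = s e then Function.extend (ι e) (fun t => g (r e, t)) 0 x.2 else 0
      map_add' := fun g h => by
        ext x
        by_cases hx : ∃ t, ι e t = x.2
        · simp only [Function.extend_def, Pi.add_apply, dif_pos hx]; split_ifs <;> simp
        · simp [Function.extend_def, hx]
      map_smul' := fun c g => by
        ext x
        by_cases hx : ∃ t, ι e t = x.2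
        · simp [Function.extend_def, hx]
        · simp [Function.extend_def, hx] }
  | .ghost e =>
    { toFun := fun g x => if x.1 = r e then g (s e, ι e x.2) else 0
      map_add' := fun g h => by ext x; simp only [Pi.add_apply]; split_ifs <;> simp
      map_smul' := fun c g => by ext x; simp }

lemma genAct_vertex (v : V) (g : V × T → K) (x : V × T) :
    genAct K s r ι (.vertex v) g x = if x.1 = v then g x else 0 := rfl

lemma genAct_edge (e : E) (g : V × T → K) (x : V × T) :
    genAct K s r ι (.edge e) g x =
      if x.1 = s e then Function.extend (ι e) (fun t => g (r e, t)) 0 x.2 else 0 := rfl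

lemma genAct_ghost (e : E) (g : V × T → K) (x : V × T) :
    genAct K s r ι (.ghost e) g x = if x.1 = r e then g (s e, ι e x.2) else 0 := rfl

lemma genAct_edge_ghost (e : E) (hι : Function.Injective (ι e)) (g : V × T → K) (v : V) (t : T) :
    genAct K s r ι (.edge e) (genAct K s r ι (.ghost e) g) (v, t) =
      if v = s e ∧ ∃ t', ι e t' = t then g (v, t) else 0 := by
  rw [genAct_edge]
  by_cases hv : v = s e
  · by_cases ht : ∃ t', ι e t' = t
    · obtain ⟨t', rfl⟩ := ht
      simp [hv, hι.extend_apply, genAct_ghost]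
    · simp [hv, ht, Function.extend_apply']
  · simp [hv]

lemma genAct_rel (hι : ∀ e, Function.Injective (ι e))
    (hdis : ∀ e f t t', s e = s f → ι e t = ι f t' → e = f)
    (hcov : ∀ e t, ∃ f t', s f = s e ∧ ι f t' = t)
    {a b : FreeAlgebra K (Gen V E)} (h : LeavittRel K s r a b) :
    FreeAlgebra.lift K (genAct K s r ι) a = FreeAlgebra.lift K (genAct K s r ι) b := by
  cases h with
  | cohn h =>
    cases h with
    | vtx_mul v w =>
      ext1 g; ext ⟨u, t⟩
      split_ifs with h
      · subst h
        simp only [map_mul, FreeAlgebra.lift_ι_apply, Module.End.mul_apply, genAct_vertex]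
        split_ifs <;> rfl
      · simp only [map_mul, FreeAlgebra.lift_ι_apply, Module.End.mul_apply, genAct_vertex,
          map_zero, LinearMap.zero_apply, Pi.zero_apply]
        split_ifs with h1 h2
        · exact absurd (h1.symm.trans h2) h
        · rfl
        · rfl
    | edge_src e =>
      ext1 g; ext ⟨u, t⟩
      simp only [map_mul, FreeAlgebra.lift_ι_apply, Module.End.mul_apply, genAct_vertex,
        genAct_edge]
      split_ifs <;> rfl
    | edge_rng e =>
      ext1 g; ext ⟨u, t⟩
      simp [Module.End.mul_apply, genAct_vertex, genAct_edge]
    | ghost_rng e =>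
      ext1 g; ext ⟨u, t⟩
      simp only [map_mul, FreeAlgebra.lift_ι_apply, Module.End.mul_apply, genAct_vertex,
        genAct_ghost]
      split_ifs <;> rfl
    | ghost_src e =>
      ext1 g; ext ⟨u, t⟩
      simp [Module.End.mul_apply, genAct_vertex, genAct_ghost]
    | ck1 e f =>
      ext1 g; ext ⟨u, t⟩
      split_ifs with h
      · subst h
        simp only [map_mul, FreeAlgebra.lift_ι_apply, Module.End.mul_apply, genAct_vertex,
          genAct_edge, genAct_ghost, (hι e).extend_apply, if_true]
        split_ifs with h1
        · rw [h1]
        · rfl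
      · simp only [map_mul, FreeAlgebra.lift_ι_apply, Module.End.mul_apply,
          genAct_edge, genAct_ghost, map_zero, LinearMap.zero_apply, Pi.zero_apply]
        split_ifs with h1 h2
        · rw [Function.extend_apply']
          · rfl
          · rintro ⟨t', ht'⟩
            exact h (hdis e f t t' h2 ht'.symm)
        · rfl
        · rfl
    | unit =>
      ext1 g; ext ⟨u, t⟩
      simp [genAct_vertex, LinearMap.sum_apply]
  | ck2 v hfin hne =>
    obtain ⟨e₀, he₀⟩ := hne
    ext1 g; ext ⟨u, t⟩
    simp only [map_sum, map_mul, FreeAlgebra.lift_ι_apply, LinearMap.sum_apply,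
      Module.End.mul_apply, Finset.sum_apply, genAct_edge_ghost K s r ι _ (hι _), genAct_vertex]
    split_ifs with hu
    · -- only the edge whose branch contains `t` contributes
      obtain ⟨f, t', hf, hft⟩ := hcov e₀ t
      have hfv : s f = v := hf.trans he₀
      rw [Finset.sum_eq_single f]
      · rw [if_pos ⟨hu.trans hfv.symm, t', hft⟩]
      · rintro e he hne
        rw [if_neg]
        rintro ⟨he', t'', ht''⟩
        refine hne (hdis e f t'' t' ?_ (ht''.trans hft.symm))
        rw [← he', hfv]; exact hu
      · intro h
        exact absurd (by simpa using hfv) h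
    · refine (Finset.sum_eq_zero fun e he => if_neg ?_).symm
      rintro ⟨he', -⟩
      exact hu (he'.trans (by simpa using he))

lemma vtx_ne_zero (v : V) : vtx K s r v ≠ 0 := by
  obtain ⟨ι, hι, hdis, hcov⟩ := exists_branching s
  intro h
  let ρ := RingQuot.liftAlgHom K (s := LeavittRel K s r)
    ⟨FreeAlgebra.lift K (genAct K s r ι), fun _ _ h => genAct_rel K s r ι hι hdis hcov h⟩
  have h0 : ρ (vtx K s r v) = 0 := by rw [h, map_zero]
  have h1 : ρ (vtx K s r v) = genAct K s r ι (.vertex v) := by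
    simp [ρ, vtx, RingQuot.liftAlgHom_mkAlgHom_apply]
  have h2 := congrFun (LinearMap.congr_fun (h1.symm.trans h0) (fun _ => 1)) (v, Sum.inr 0)
  simp [genAct_vertex] at h2

/-! ### Commutativity when all edges are loops with distinct sources -/

lemma comm_of_generators {A : Type*} [Ring A] [Algebra K A] {X : Type*}
    (π : FreeAlgebra K X →ₐ[K] A)
    (h : ∀ i j, Commute (π (FreeAlgebra.ι K i)) (π (FreeAlgebra.ι K j))) (x y) :
    Commute (π x) (π y) := by
  induction x using FreeAlgebra.induction with
  | grade0 c => rw [AlgHom.commutes]; exact Algebra.commute_algebraMap_left _ _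
  | grade1 i =>
    induction y using FreeAlgebra.induction with
    | grade0 c => rw [AlgHom.commutes]; exact Algebra.commute_algebraMap_right _ _
    | grade1 j => exact h i j
    | mul a b ha hb => rw [map_mul]; exact ha.mul_right hb
    | add a b ha hb => rw [map_add]; exact ha.add_right hb
  | mul a b ha hb => rw [map_mul]; exact ha.mul_left hb
  | add a b ha hb => rw [map_add]; exact ha.add_left hb

/-- The algebra is commutative if every vertex emits at most one edge and all edges are loops. -/
lemma comm_of_loops (hloop : ∀ e, s e = r e) (hinj : Function.Injective s)
    (x y : LeavittPathAlgebra K s r) : x * y = y * x := by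
  -- each generator lies in the corner `vtx v * L * vtx v` of its vertex `v`; generators
  -- with different vertices multiply to zero
  have orth : ∀ {v w : V} {a b : LeavittPathAlgebra K s r}, v ≠ w →
      a * vtx K s r v = a → vtx K s r w * b = b → a * b = 0 := by
    intro v w a b hvw ha hb
    rw [← ha, ← hb, mul_assoc, ← mul_assoc (vtx K s r v), vtx_mul_vtx, if_neg hvw]
    simp
  let bv : Gen V E → V := fun g => match g with
    | .vertex v => v
    | .edge e => s e
    | .ghost e => s e
  set π := RingQuot.mkAlgHom K (LeavittRel K s r)
  have hl : ∀ g, vtx K s r (bv g) * π (FreeAlgebra.ι K g) = π (FreeAlgebra.ι K g) := by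
    rintro (v | e | e)
    · exact (vtx_mul_vtx K s r v v).trans (if_pos rfl)
    · exact vtx_mul_edg K s r e
    · change vtx K s r (s e) * gh K s r e = gh K s r e
      rw [hloop]; exact vtx_mul_gh K s r e
  have hr : ∀ g, π (FreeAlgebra.ι K g) * vtx K s r (bv g) = π (FreeAlgebra.ι K g) := by
    rintro (v | e | e)
    · exact (vtx_mul_vtx K s r v v).trans (if_pos rfl)
    · change edg K s r e * vtx K s r (s e) = edg K s r e
      rw [hloop]; exact edg_mul_vtx K s r e
    · exact gh_mul_vtx K s r e
  have eg : ∀ e, Commute (edg K s r e) (gh K s r e) := fun e => by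
    rw [Commute, SemiconjBy, edg_mul_gh_of_unique K s r e (fun f hf => hinj hf), gh_mul_edg,
      if_pos rfl, hloop]
  have hgen : ∀ g h, Commute (π (FreeAlgebra.ι K g)) (π (FreeAlgebra.ι K h)) := by
    intro g h
    by_cases hgh : bv g = bv h
    · rcases g with v | e | e
      · have h1 := hl h; have h2 := hr h
        rw [← hgh] at h1 h2
        exact h1.trans h2.symm
      · rcases h with w | f | f
        · have h1 := hl (.edge e); have h2 := hr (.edge e)
          rw [hgh] at h1 h2
          exact h2.trans h1.symm
        · obtain rfl : e = f := hinj hgh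
          exact Commute.refl _
        · obtain rfl : e = f := hinj hgh
          exact eg e
      · rcases h with w | f | f
        · have h1 := hl (.ghost e); have h2 := hr (.ghost e)
          rw [hgh] at h1 h2
          exact h2.trans h1.symm
        · obtain rfl : e = f := hinj hgh
          exact (eg e).symm
        · obtain rfl : e = f := hinj hgh
          exact Commute.refl _
    · exact (orth hgh (hr g) (hl h)).trans (orth (Ne.symm hgh) (hr h) (hl g)).symm
  obtain ⟨x, rfl⟩ := RingQuot.mkAlgHom_surjective K (LeavittRel K s r) x
  obtain ⟨y, rfl⟩ := RingQuot.mkAlgHom_surjective K (LeavittRel K s r) y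
  exact comm_of_generators K π hgen x y

end relations

end LPA

/-- if the unit group of a unital Leavitt path algebra over a non-absolute
field is locally solvable, then the algebra is commutative. -/
theorem stmt6 (K V E : Type*) [Field K] [Fintype V] (s r : E → V)
    (hK : ¬ IsAbsoluteField K)
    (hsolv : ∀ S : Finset (LPA.LeavittPathAlgebra K s r)ˣ,
      IsSolvable (Subgroup.closure (S : Set (LPA.LeavittPathAlgebra K s r)ˣ))) :
    ∀ x y : LPA.LeavittPathAlgebra K s r, x * y = y * x := by
  obtain ⟨a, ha, ha4⟩ := exists_pow_four_ne_one hK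
  have key : ∀ (p q : Fin 2 → LPA.LeavittPathAlgebra K s r) (v : V),
      (∀ i j, q i * p j = if i = j then LPA.vtx K s r v else 0) →
      (∀ i, p i * LPA.vtx K s r v = p i) → False := by
    intro p q v hqp hpw
    exact LPA.slHom_ne_one p q hqp hpw (LPA.vtx_ne_zero K s r v)
      ((LPA.vtx_mul_vtx K s r v v).trans (if_pos rfl))
      (slHom_eq_one (LPA.slHom p q hqp hpw) hsolv a ha ha4)
  -- a non-loop `f` gives matrix units from `p = (f, r(f))`
  have hloop : ∀ f, s f = r f := by
    intro f
    by_contra hf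
    refine key ![LPA.edg K s r f, LPA.vtx K s r (r f)] ![LPA.gh K s r f, LPA.vtx K s r (r f)]
      (r f) ?_ ?_
    · intro i j
      fin_cases i <;> fin_cases j
      · simp [LPA.gh_mul_edg]
      · have : LPA.gh K s r f * LPA.vtx K s r (r f) = 0 := by
          rw [← LPA.gh_mul_vtx, mul_assoc, LPA.vtx_mul_vtx, if_neg hf, mul_zero]
        simpa using this
      · have : LPA.vtx K s r (r f) * LPA.edg K s r f = 0 := by
          rw [← LPA.vtx_mul_edg, ← mul_assoc, LPA.vtx_mul_vtx, if_neg (Ne.symm hf), zero_mul]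
        simpa using this
      · simp [LPA.vtx_mul_vtx]
    · intro i
      fin_cases i
      · simp [LPA.edg_mul_vtx]
      · simp [LPA.vtx_mul_vtx]
  refine LPA.comm_of_loops K s r hloop fun e f hef => ?_
  by_contra hne
  -- distinct loops `e`, `f` at one vertex give matrix units from `p = (e, f)`
  have hr : r f = r e := by rw [← hloop, ← hloop, hef]
  refine key ![LPA.edg K s r e, LPA.edg K s r f] ![LPA.gh K s r e, LPA.gh K s r f] (r e) ?_ ?_
  · intro i j
    fin_cases i <;> fin_cases j <;> simp [LPA.gh_mul_edg, hne, Ne.symm hne, hr]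
  · intro i
    fin_cases i
    · simp [LPA.edg_mul_vtx]
    · simp [← hr, LPA.edg_mul_vtx]
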